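/- For every c > 0 there exists a constant C, depending only on c, such that for every a > 0, all x, y ∈ (0,a) and every t ≥ a²: ∫_0^t ∫_0^a p^a_s(x,z)·e^{−cz}·p^a_{t−s}(z,y) dz ds ≤ C·( t/a³ + min(1,1/x) + min(1,1/y) )·p^a_t(x,y). -/

import Mathlib

open Real MeasureTheory Set Filter

/-- Transition density of Brownian motion killed upon exiting `(0,a)`. -/
noncomputable def pker (a t x y : ℝ) : ℝ :=
  (2/a) * ∑' n : ℕ, Real.exp (-(π^2) * ((n : ℝ) + 1)^2 * t / (2 * a^2)) *
    Real.sin (π * ((n : ℝ) + 1) * x / a) * Real.sin (π * ((n : ℝ) + 1) * y / a)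


lemma cos_sum_aux (θ : ℝ) (N : ℕ) :
    2 * Real.sin (θ / 2) * ∑ n ∈ Finset.range N, Real.cos (n * θ)
      = Real.sin (N * θ - θ / 2) + Real.sin (θ / 2) := by
  induction N with
  | zero => simp [Real.sin_neg]
  | succ N ih =>
    rw [Finset.sum_range_succ, mul_add, ih]
    have e1 : ((N + 1 : ℕ) : ℝ) * θ - θ / 2 = N * θ + θ / 2 := by push_cast; ring
    rw [e1, Real.sin_add, Real.sin_sub]; ring

lemma cos_sum_eval (N : ℕ) (m : ℤ) (h : ¬ (2 * (N : ℤ) ∣ m)) (hN : 0 < N) :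
    ∑ n ∈ Finset.range N, Real.cos (n * (m * π / N)) = (1 - (-1 : ℝ) ^ m) / 2 := by
  have hN' : (N : ℝ) ≠ 0 := by positivity
  have hs : Real.sin ((m * π / N) / 2) ≠ 0 := by
    intro hs
    rw [Real.sin_eq_zero_iff] at hs
    obtain ⟨k, hk⟩ := hs
    apply h
    refine ⟨k, ?_⟩
    have : (m : ℝ) = 2 * N * k := by
      field_simp at hk
      have := Real.pi_pos
      nlinarith
    exact_mod_cast this
  have := cos_sum_aux (m * π / N) N
  have e : (N : ℝ) * (m * π / N) - (m * π / N) / 2 = m * π - (m * π / N) / 2 := by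
    field_simp
  rw [e, Real.sin_int_mul_pi_sub] at this
  have : 2 * Real.sin ((m * π / N) / 2) * (∑ n ∈ Finset.range N, Real.cos (n * (m * π / N))
     - (1 - (-1 : ℝ) ^ m) / 2) = 0 := by
    rw [mul_sub, this]; ring
  rcases mul_eq_zero.1 this with h1 | h1
  · exact absurd (by linarith) hs
  · linarith

/-- discrete kernel -/
noncomputable def dker (N m i j : ℕ) : ℝ :=
  ∑ n ∈ Finset.range N, Real.cos (n * π / N) ^ m * Real.sin (n * (i * π / N)) * Real.sin (n * (j * π / N))

lemma dker_zero_nonneg (N i j : ℕ) (hN : 0 < N) (hi : i ≤ N) (hj : j ≤ N) : 0 ≤ dker N 0 i j := by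
  unfold dker
  by_cases hij : i = j
  · subst hij
    apply Finset.sum_nonneg
    intro n _
    rw [pow_zero, one_mul]
    exact mul_self_nonneg _
  · have h1 := cos_sum_eval N ((i : ℤ) - j) (by
      intro h; have := Int.eq_zero_of_abs_lt_dvd h (by rw [abs_lt]; constructor <;> omega); omega) hN
    have h2 := cos_sum_eval N ((i : ℤ) + j) (by
      intro h; have := Int.eq_zero_of_abs_lt_dvd h (by rw [abs_lt]; constructor <;> omega); omega) hN
    have h3 : (-1 : ℝ) ^ ((i : ℤ) - j) = (-1 : ℝ) ^ ((i : ℤ) + j) := by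
      have : (i : ℤ) + j = (i - j) + 2 * j := by ring
      rw [this, zpow_add₀ (by norm_num), zpow_mul]; norm_num
    have h4 : ∑ n ∈ Finset.range N, Real.cos (n * π / N) ^ 0 * Real.sin (n * (i * π / N)) * Real.sin (n * (j * π / N))
      = (∑ n ∈ Finset.range N, Real.cos (n * ((((i : ℤ) - j : ℤ) : ℝ) * π / N))
        - ∑ n ∈ Finset.range N, Real.cos (n * ((((i : ℤ) + j : ℤ) : ℝ) * π / N))) / 2 := by
      rw [← Finset.sum_sub_distrib, Finset.sum_div]
      apply Finset.sum_congr rfl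
      intro n _
      push_cast
      have e1 : (n : ℝ) * (((i : ℝ) - j) * π / N) = n * (i * π / N) - n * (j * π / N) := by ring
      have e2 : (n : ℝ) * (((i : ℝ) + j) * π / N) = n * (i * π / N) + n * (j * π / N) := by ring
      rw [e1, e2, Real.cos_sub, Real.cos_add]; ring
    rw [h4, h1, h2, h3]; simp

lemma dker_nonneg (N m i j : ℕ) (hN : 0 < N) (hi : i ≤ N) (hj : j ≤ N) : 0 ≤ dker N m i j := by
  induction m generalizing i with
  | zero => exact dker_zero_nonneg N i j hN hi hj
  | succ m ih =>
    have hN' : (N : ℝ) ≠ 0 := by positivity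
    rcases Nat.eq_zero_or_pos i with h0 | h0
    · subst h0; simp [dker]
    rcases Nat.eq_or_lt_of_le hi with h1 | h1
    · subst h1
      have : dker i (m+1) i j = 0 := by
        unfold dker
        apply Finset.sum_eq_zero
        intro n _
        rw [mul_div_cancel_left₀ _ hN', Real.sin_nat_mul_pi]; simp
      rw [this]
    · obtain ⟨k, rfl⟩ : ∃ k, i = k + 1 := ⟨i - 1, by omega⟩
      have : dker N (m+1) (k+1) j = (dker N m (k+2) j + dker N m k j) / 2 := by
        unfold dker
        rw [← Finset.sum_add_distrib, Finset.sum_div]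
        apply Finset.sum_congr rfl
        intro n _
        have e1 : (n : ℝ) * ((k + 2 : ℕ) * π / N) = n * ((k + 1 : ℕ) * π / N) + n * π / N := by
          push_cast; ring
        have e2 : (n : ℝ) * ((k : ℕ) * π / N) = n * ((k + 1 : ℕ) * π / N) - n * π / N := by
          push_cast; ring
        rw [e1, e2, Real.sin_add, Real.sin_sub]; ring
      rw [this]
      have := ih (k+2) (by omega)
      have := ih k (by omega)
      linarith

lemma cker_nonneg (N i j : ℕ) (hN : 0 < N) (hi : i ≤ N) (hj : j ≤ N) (r : ℝ) (hr : 0 ≤ r) :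
    0 ≤ ∑ n ∈ Finset.range N, Real.exp (r * (Real.cos (n * π / N) - 1)) *
      Real.sin (n * (i * π / N)) * Real.sin (n * (j * π / N)) := by
  have h : HasSum (fun m : ℕ => ∑ n ∈ Finset.range N, (r * Real.cos (n * π / N)) ^ m / m.factorial *
      Real.sin (n * (i * π / N)) * Real.sin (n * (j * π / N)))
      (∑ n ∈ Finset.range N, Real.exp (r * Real.cos (n * π / N)) *
      Real.sin (n * (i * π / N)) * Real.sin (n * (j * π / N))) := by
    apply hasSum_sum
    intro n _
    apply HasSum.mul_right
    apply HasSum.mul_right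
    rw [Real.exp_eq_exp_ℝ]
    exact NormedSpace.expSeries_div_hasSum_exp _
  have h2 := h.nonneg (fun m => by
    have : ∑ n ∈ Finset.range N, (r * Real.cos (n * π / N)) ^ m / m.factorial *
      Real.sin (n * (i * π / N)) * Real.sin (n * (j * π / N)) = r ^ m / m.factorial * dker N m i j := by
      unfold dker
      rw [Finset.mul_sum]
      apply Finset.sum_congr rfl
      intro n _
      rw [mul_pow]; ring
    rw [this]
    exact mul_nonneg (by positivity) (dker_nonneg N m i j hN hi hj))
  have h3 : ∑ n ∈ Finset.range N, Real.exp (r * (Real.cos (n * π / N) - 1)) *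
      Real.sin (n * (i * π / N)) * Real.sin (n * (j * π / N)) = Real.exp (-r) *
      ∑ n ∈ Finset.range N, Real.exp (r * Real.cos (n * π / N)) *
      Real.sin (n * (i * π / N)) * Real.sin (n * (j * π / N)) := by
    rw [Finset.mul_sum]
    apply Finset.sum_congr rfl
    intro n _
    rw [mul_sub, mul_one, sub_eq_neg_add, Real.exp_add]; ring
  rw [h3]
  positivity

lemma summable_gauss (c : ℝ) (hc : 0 < c) : Summable (fun n : ℕ => Real.exp (-c * (n : ℝ) ^ 2)) := by
  have h : Summable (fun n : ℕ => Real.exp (n * (-c))) := Real.summable_exp_nat_mul_iff.2 (by linarith)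
  refine Summable.of_nonneg_of_le (fun n => (Real.exp_pos _).le) (fun n => ?_) h
  apply Real.exp_le_exp.2
  have : (n : ℝ) ≤ (n : ℝ) ^ 2 := by exact_mod_cast Nat.le_self_pow (by norm_num) n
  nlinarith

lemma tendsto_rate (τ : ℝ) (n : ℕ) :
    Tendsto (fun N : ℕ => 2 * τ * (N : ℝ) ^ 2 / π ^ 2 * (Real.cos (n * π / N) - 1)) atTop
      (nhds (-τ * (n : ℝ) ^ 2)) := by
  have h0 : Tendsto (fun N : ℕ => ((n : ℝ) * π / 2) / (N : ℝ)) atTop (nhds 0) :=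
    tendsto_const_div_atTop_nhds_zero_nat _
  have h1 : Tendsto (fun N : ℕ => -τ * (n : ℝ) ^ 2 * (Real.sinc (((n : ℝ) * π / 2) / (N : ℝ))) ^ 2) atTop
      (nhds (-τ * (n : ℝ) ^ 2 * 1 ^ 2)) := by
    have := (Real.continuous_sinc.tendsto 0).comp h0
    rw [Real.sinc_zero] at this
    exact (this.pow 2).const_mul _
  rw [one_pow, mul_one] at h1
  refine h1.congr' ?_
  filter_upwards [eventually_gt_atTop 0] with N hN
  have hN' : (N : ℝ) ≠ 0 := by positivity
  have hpi := Real.pi_ne_zero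
  rcases Nat.eq_zero_or_pos n with h | h
  · subst h; simp
  have hn : (n : ℝ) ≠ 0 := by positivity
  rw [Real.sinc_of_ne_zero (by positivity)]
  have : (n : ℝ) * π / N = 2 * ((n : ℝ) * π / 2 / N) := by ring
  rw [this, Real.cos_two_mul, Real.cos_sq']
  field_simp
  ring

/-- normalized kernel -/
noncomputable def Kn (τ α β : ℝ) : ℝ :=
  ∑' n : ℕ, Real.exp (-τ * ((n : ℝ) + 1) ^ 2) * Real.sin (((n : ℝ) + 1) * α) * Real.sin (((n : ℝ) + 1) * β)

lemma abs_term_le (e u v : ℝ) : |Real.exp e * Real.sin u * Real.sin v| ≤ Real.exp e := by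
  rw [abs_mul, abs_mul, abs_of_pos (Real.exp_pos _)]
  calc Real.exp e * |Real.sin u| * |Real.sin v| ≤ Real.exp e * 1 * 1 := by
        gcongr
        · exact Real.abs_sin_le_one _
        · exact Real.abs_sin_le_one _
    _ = _ := by ring

lemma Kn_nonneg (τ α β : ℝ) (hτ : 0 < τ) (hα : α ∈ Set.Icc 0 π) (hβ : β ∈ Set.Icc 0 π) :
    0 ≤ Kn τ α β := by
  have hpi := Real.pi_pos
  set G : ℕ → ℝ := fun n => Real.exp (-τ * (n : ℝ) ^ 2) * Real.sin ((n : ℝ) * α) * Real.sin ((n : ℝ) * β)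
    with hG
  have hGs : Summable G := by
    refine Summable.of_norm_bounded (summable_gauss τ hτ) (fun n => ?_)
    exact abs_term_le _ _ _
  have hK : Kn τ α β = ∑' n, G n := by
    rw [hGs.tsum_eq_zero_add]
    simp [hG, Kn]
  rw [hK]
  let ix : ℝ → ℕ → ℕ := fun α N => ⌊(α / π) * N⌋₊
  have hix : ∀ α ∈ Set.Icc 0 π, ∀ N, ix α N ≤ N := by
    intro α hα N
    apply Nat.floor_le_of_le
    have : α / π ≤ 1 := by rw [div_le_one hpi]; exact hα.2
    calc α / π * N ≤ 1 * N := by gcongr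
      _ = N := one_mul _
  have hlim : ∀ α ∈ Set.Icc 0 π, ∀ n : ℕ, Tendsto (fun N : ℕ => Real.sin (n * (ix α N * π / N))) atTop
      (nhds (Real.sin (n * α))) := by
    intro α hα n
    apply (Real.continuous_sin.tendsto _).comp
    apply Tendsto.const_mul
    have h := (tendsto_nat_floor_mul_div_atTop (R := ℝ) (a := α / π) (div_nonneg hα.1 hpi.le)).comp
      tendsto_natCast_atTop_atTop
    have h := h.mul_const π
    rw [div_mul_cancel₀ _ hpi.ne'] at h
    refine h.congr (fun N => ?_)
    simp only [Function.comp, ix]; ring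
  let F : ℕ → ℕ → ℝ := fun N n => if n < N then
      Real.exp (2 * τ * (N : ℝ) ^ 2 / π ^ 2 * (Real.cos (n * π / N) - 1)) *
      Real.sin (n * (ix α N * π / N)) * Real.sin (n * (ix β N * π / N)) else 0
  have hT : Tendsto (fun N => ∑' n, F N n) atTop (nhds (∑' n, G n)) := by
    refine tendsto_tsum_of_dominated_convergence
      (bound := fun n : ℕ => Real.exp (-(4 * τ / π ^ 2) * (n : ℝ) ^ 2))
      (summable_gauss _ (by positivity)) ?_ ?_
    · intro n
      have h1 := (((Real.continuous_exp.tendsto _).comp (tendsto_rate τ n)).mul (hlim α hα n)).mul (hlim β hβ n)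
      refine h1.congr' ?_
      filter_upwards [eventually_gt_atTop n] with N hN
      simp only [F, if_pos hN, Function.comp]
    · refine Eventually.of_forall (fun N n => ?_)
      simp only [F]
      split_ifs with h
      · refine (abs_term_le _ _ _).trans (Real.exp_le_exp.2 ?_)
        have hN : (0 : ℝ) < N := by exact_mod_cast (by omega : 0 < N)
        have hn : (n : ℝ) ≤ N := by exact_mod_cast h.le
        have := Real.cos_le_one_sub_mul_cos_sq (x := n * π / N) (by
          rw [abs_of_nonneg (by positivity), div_le_iff₀ hN, mul_comm]
          gcongr)
        calc 2 * τ * (N : ℝ) ^ 2 / π ^ 2 * (Real.cos (n * π / N) - 1)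
            ≤ 2 * τ * (N : ℝ) ^ 2 / π ^ 2 * (- (2 / π ^ 2 * (n * π / N) ^ 2)) := by
              gcongr; linarith
          _ = _ := by field_simp; ring
      · simp; positivity
  refine ge_of_tendsto hT ?_
  filter_upwards [eventually_gt_atTop 0] with N hN
  have : ∑' n, F N n = ∑ n ∈ Finset.range N, Real.exp (2 * τ * (N : ℝ) ^ 2 / π ^ 2 * (Real.cos (n * π / N) - 1)) *
      Real.sin (n * (ix α N * π / N)) * Real.sin (n * (ix β N * π / N)) := by
    rw [tsum_eq_sum (s := Finset.range N)]
    · apply Finset.sum_congr rfl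
      intro n hn
      simp only [F, if_pos (Finset.mem_range.1 hn)]
    · intro n hn
      simp only [F, if_neg (fun h => hn (Finset.mem_range.2 h))]
  rw [this]
  exact cker_nonneg N _ _ hN (hix α hα N) (hix β hβ N) _ (by positivity)

lemma abs_sin_nat_mul_le' (n : ℕ) (θ : ℝ) : |Real.sin (n * θ)| ≤ n * |Real.sin θ| := by
  induction n with
  | zero => simp
  | succ n ih =>
    have e : ((n + 1 : ℕ) : ℝ) * θ = n * θ + θ := by push_cast; ring
    rw [e, Real.sin_add]
    calc |Real.sin (n * θ) * Real.cos θ + Real.cos (n * θ) * Real.sin θ|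
        ≤ |Real.sin (n * θ)| * |Real.cos θ| + |Real.cos (n * θ)| * |Real.sin θ| := by
          rw [← abs_mul, ← abs_mul]; exact abs_add_le _ _
      _ ≤ |Real.sin (n * θ)| * 1 + 1 * |Real.sin θ| := by
          gcongr
          · exact Real.abs_cos_le_one _
          · exact Real.abs_cos_le_one _
      _ ≤ _ := by push_cast; linarith

lemma sq_le_four_pow (n : ℕ) : ((n : ℝ) + 1) ^ 2 ≤ 4 ^ n := by
  induction n with
  | zero => simp
  | succ n ih =>
    rw [pow_succ (4 : ℝ)]; push_cast
    nlinarith [(Nat.cast_nonneg n : (0:ℝ) ≤ n)]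

lemma Kn_term_bound (τ α β : ℝ) (hτ : 2 ≤ τ) (n : ℕ) :
    |Real.exp (-τ * ((n : ℝ) + 1) ^ 2) * Real.sin (((n : ℝ) + 1) * α) * Real.sin (((n : ℝ) + 1) * β)|
      ≤ Real.exp (-τ) * |Real.sin α| * |Real.sin β| * (1 / 3) ^ n := by
  have h1 := abs_sin_nat_mul_le' (n + 1) α
  have h2 := abs_sin_nat_mul_le' (n + 1) β
  push_cast at h1 h2
  have hexp : Real.exp (-τ * ((n : ℝ) + 1) ^ 2) ≤ Real.exp (-τ) * (1 / 12) ^ n := by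
    have e12 : Real.exp (-6) ≤ 1 / 12 := by
      have : (12 : ℝ) ≤ Real.exp 6 := by
        have h := Real.add_one_le_exp (3 : ℝ)
        have : Real.exp 6 = Real.exp 3 * Real.exp 3 := by rw [← Real.exp_add]; norm_num
        rw [this]; nlinarith
      rw [Real.exp_neg, one_div]
      gcongr
    calc Real.exp (-τ * ((n : ℝ) + 1) ^ 2) ≤ Real.exp (-τ + n * (-6)) := by
          apply Real.exp_le_exp.2
          have hn : (n : ℝ) ≤ (n : ℝ) ^ 2 := by exact_mod_cast Nat.le_self_pow (by norm_num) n
          have hn0 : (0 : ℝ) ≤ n := Nat.cast_nonneg n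
          nlinarith [mul_nonneg (sub_nonneg.2 hτ) hn0, mul_nonneg (sub_nonneg.2 hτ) (sq_nonneg (n : ℝ))]
      _ = Real.exp (-τ) * Real.exp (-6) ^ n := by rw [Real.exp_add, Real.exp_nat_mul]
      _ ≤ _ := by gcongr
  rw [abs_mul, abs_mul, abs_of_pos (Real.exp_pos _)]
  calc _ ≤ (Real.exp (-τ) * (1 / 12) ^ n) * (((n : ℝ) + 1) * |Real.sin α|) * (((n : ℝ) + 1) * |Real.sin β|) := by
        gcongr
    _ = Real.exp (-τ) * |Real.sin α| * |Real.sin β| * ((1 / 12) ^ n * ((n : ℝ) + 1) ^ 2) := by ring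
    _ ≤ Real.exp (-τ) * |Real.sin α| * |Real.sin β| * ((1 / 12) ^ n * 4 ^ n) := by
        gcongr; exact sq_le_four_pow n
    _ = _ := by rw [← mul_pow]; norm_num

lemma Kn_approx (τ α β : ℝ) (hτ : 2 ≤ τ) (hα : α ∈ Set.Icc 0 π) (hβ : β ∈ Set.Icc 0 π) :
    |Kn τ α β - Real.exp (-τ) * Real.sin α * Real.sin β| ≤ 1 / 2 * (Real.exp (-τ) * Real.sin α * Real.sin β) := by
  have ha := abs_of_nonneg (Real.sin_nonneg_of_mem_Icc hα)
  have hb := abs_of_nonneg (Real.sin_nonneg_of_mem_Icc hβ)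
  have hb' := Kn_term_bound τ α β hτ
  rw [ha, hb] at hb'
  set E := Real.exp (-τ) * Real.sin α * Real.sin β with hE
  have hg : HasSum (fun n : ℕ => E * (1 / 3 : ℝ) ^ n) (E * (1 - 1 / 3)⁻¹) :=
    (hasSum_geometric_of_lt_one (by norm_num) (by norm_num)).mul_left _
  have hs : Summable (fun n : ℕ => Real.exp (-τ * ((n : ℝ) + 1) ^ 2) * Real.sin (((n : ℝ) + 1) * α) * Real.sin (((n : ℝ) + 1) * β)) :=
    Summable.of_norm_bounded hg.summable hb'
  have h0 : Kn τ α β - E = ∑' n : ℕ, Real.exp (-τ * (((n + 1 : ℕ) : ℝ) + 1) ^ 2) * Real.sin ((((n + 1 : ℕ) : ℝ) + 1) * α) * Real.sin ((((n + 1 : ℕ) : ℝ) + 1) * β) := by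
    unfold Kn
    rw [hs.tsum_eq_zero_add]
    simp [hE]
  rw [h0]
  have hg' : HasSum (fun n : ℕ => E * (1 / 3 : ℝ) ^ (n + 1)) (1 / 2 * E) := by
    have := hg.mul_right (1 / 3 : ℝ)
    convert! this using 1
    · ext n; ring
    · norm_num; ring
  rw [← Real.norm_eq_abs]
  exact tsum_of_norm_bounded hg' (fun n => hb' (n + 1))

lemma Kn_upper (τ α β : ℝ) (hτ : 2 ≤ τ) (hα : α ∈ Set.Icc 0 π) (hβ : β ∈ Set.Icc 0 π) :
    |Kn τ α β| ≤ 3 / 2 * (Real.exp (-τ) * Real.sin α * Real.sin β) := by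
  have h := abs_le.1 (Kn_approx τ α β hτ hα hβ)
  have h2 := Kn_nonneg τ α β (by linarith) hα hβ
  rw [abs_of_nonneg h2]; linarith [h.2]

lemma Kn_lower (τ α β : ℝ) (hτ : 2 ≤ τ) (hα : α ∈ Set.Icc 0 π) (hβ : β ∈ Set.Icc 0 π) :
    1 / 2 * (Real.exp (-τ) * Real.sin α * Real.sin β) ≤ Kn τ α β := by
  have h := abs_le.1 (Kn_approx τ α β hτ hα hβ)
  linarith [h.1]

lemma Kn_comm (τ α β : ℝ) : Kn τ α β = Kn τ β α := by
  unfold Kn; congr 1; ext n; ring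

lemma green_sum (α β : ℝ) (hβ : 0 ≤ β) (hαβ : β ≤ α) (hα : α ≤ π) :
    HasSum (fun n : ℕ => 1 / ((n : ℝ) + 1) ^ 2 * (Real.sin (((n : ℝ) + 1) * α) * Real.sin (((n : ℝ) + 1) * β)))
      (β * (π - α) / 2) := by
  have hpi := Real.pi_pos
  have h1 := hasSum_one_div_nat_pow_mul_cos (k := 1) one_ne_zero (x := (α - β) / (2 * π))
    ⟨by apply div_nonneg <;> linarith, by rw [div_le_one (by positivity)]; linarith⟩
  have h2 := hasSum_one_div_nat_pow_mul_cos (k := 1) one_ne_zero (x := (α + β) / (2 * π))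
    ⟨by apply div_nonneg <;> linarith, by rw [div_le_one (by positivity)]; linarith⟩
  have h3 := (h1.sub h2).div_const 2
  rw [← hasSum_nat_add_iff' 1] at h3
  convert! h3 using 1
  · ext n
    have e1 : 2 * π * ((n + 1 : ℕ) : ℝ) * ((α - β) / (2 * π)) = ((n : ℝ) + 1) * α - ((n : ℝ) + 1) * β := by
      push_cast; field_simp
    have e2 : 2 * π * ((n + 1 : ℕ) : ℝ) * ((α + β) / (2 * π)) = ((n : ℝ) + 1) * α + ((n : ℝ) + 1) * β := by
      push_cast; field_simp
    rw [e1, e2, Real.cos_sub, Real.cos_add]; push_cast; ring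
  · have hB : ∀ x : ℝ, (Polynomial.map (algebraMap ℚ ℝ) (Polynomial.bernoulli (2 * 1))).eval x = x ^ 2 - x + 1 / 6 := by
      intro x
      have hb2 : _root_.bernoulli 2 = 1 / 6 := by
        rw [bernoulli_eq_bernoulli'_of_ne_one (by norm_num)]; norm_num [bernoulli'_two]
      simp [Polynomial.bernoulli, Finset.sum_range_succ, bernoulli_one, hb2, Polynomial.map_monomial, Polynomial.eval_add]
      ring
    rw [hB, hB]
    simp
    field_simp
    ring

lemma Kn_measurable (κ α : ℝ) : Measurable (fun p : ℝ × ℝ => Kn (κ * p.1) α p.2) := by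
  unfold Kn
  apply Measurable.tsum
  intro n
  fun_prop

lemma green_lint_aux (κ α β : ℝ) (hκ : 0 < κ) (hβ : 0 ≤ β) (hαβ : β ≤ α) (hα : α ≤ π) :
    ∫⁻ s in Set.Ioi (0 : ℝ), ENNReal.ofReal (Kn (κ * s) α β) ≤ ENNReal.ofReal (β * (π - α) / 2 / κ) := by
  set F : ℕ → ℝ → ℝ := fun n s => Real.exp (-(κ * s) * ((n : ℝ) + 1) ^ 2) *
    Real.sin (((n : ℝ) + 1) * α) * Real.sin (((n : ℝ) + 1) * β) with hF
  have hneg : ∀ n : ℕ, -κ * ((n : ℝ) + 1) ^ 2 < 0 := fun n => by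
    have : 0 < κ * ((n : ℝ) + 1) ^ 2 := by positivity
    linarith
  have hFe : ∀ n s, F n s = Real.exp ((-κ * ((n : ℝ) + 1) ^ 2) * s) *
      (Real.sin (((n : ℝ) + 1) * α) * Real.sin (((n : ℝ) + 1) * β)) := by
    intro n s; simp only [hF]; rw [mul_assoc]; congr 2; ring
  have hint : ∀ n, Integrable (F n) (volume.restrict (Set.Ioi (0 : ℝ))) := by
    intro n
    have := (integrableOn_exp_mul_Ioi (hneg n) 0).mul_const
      (Real.sin (((n : ℝ) + 1) * α) * Real.sin (((n : ℝ) + 1) * β))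
    exact this.congr (Eventually.of_forall (fun s => (hFe n s).symm))
  have hval : ∀ n, ∫ s in Set.Ioi (0 : ℝ), F n s = 1 / κ * (1 / ((n : ℝ) + 1) ^ 2 *
      (Real.sin (((n : ℝ) + 1) * α) * Real.sin (((n : ℝ) + 1) * β))) := by
    intro n
    simp only [hFe]
    rw [integral_mul_const, integral_exp_mul_Ioi (hneg n)]
    have : (n : ℝ) + 1 ≠ 0 := by positivity
    simp
    field_simp
  have hvaln : ∀ n, ∫ s in Set.Ioi (0 : ℝ), ‖F n s‖ = 1 / κ * (1 / ((n : ℝ) + 1) ^ 2 *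
      |Real.sin (((n : ℝ) + 1) * α) * Real.sin (((n : ℝ) + 1) * β)|) := by
    intro n
    simp only [hFe, norm_mul, Real.norm_eq_abs, abs_exp]
    rw [integral_mul_const, integral_exp_mul_Ioi (hneg n)]
    have : (n : ℝ) + 1 ≠ 0 := by positivity
    simp [abs_mul]
    field_simp
  have hsum : Summable fun n => ∫ s in Set.Ioi (0 : ℝ), ‖F n s‖ := by
    simp only [hvaln]
    apply Summable.mul_left
    have h2 : Summable (fun n : ℕ => 1 / ((n : ℝ) + 1) ^ 2) := by
      have := (summable_nat_add_iff 1).2 (Real.summable_one_div_nat_pow.2 (by norm_num : 1 < 2))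
      simpa using this
    refine Summable.of_nonneg_of_le (fun n => by positivity) (fun n => ?_) h2
    rw [abs_mul]
    calc _ ≤ 1 / ((n : ℝ) + 1) ^ 2 * (1 * 1) := by
          gcongr
          · exact Real.abs_sin_le_one _
          · exact Real.abs_sin_le_one _
      _ = _ := by ring
  have H := hasSum_integral_of_summable_integral_norm hint hsum
  have hI : Integrable (fun s => ∑' n, F n s) (volume.restrict (Set.Ioi (0 : ℝ))) := by
    refine ⟨?_, ?_⟩
    · apply Measurable.aestronglyMeasurable
      apply Measurable.tsum
      intro n
      simp only [hF]
      fun_prop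
    · unfold HasFiniteIntegral
      calc ∫⁻ s in Set.Ioi (0 : ℝ), ‖∑' n, F n s‖ₑ ≤ ∫⁻ s in Set.Ioi (0 : ℝ), ∑' n, ‖F n s‖ₑ :=
            lintegral_mono (fun s => enorm_tsum_le_tsum_enorm)
        _ = ∑' n, ∫⁻ s in Set.Ioi (0 : ℝ), ‖F n s‖ₑ := by
            rw [lintegral_tsum]
            intro n; exact (hint n).1.enorm
        _ = ∑' n, ENNReal.ofReal (∫ s in Set.Ioi (0 : ℝ), ‖F n s‖) := by
            congr 1; ext n
            rw [ofReal_integral_norm_eq_lintegral_enorm (hint n)]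
        _ < ⊤ := by
            rw [← ENNReal.ofReal_tsum_of_nonneg (fun n => by positivity) hsum]
            exact ENNReal.ofReal_lt_top
  have hKF : ∀ s, Kn (κ * s) α β = ∑' n, F n s := fun s => rfl
  simp only [hKF]
  rw [← ofReal_integral_eq_lintegral_ofReal hI]
  · apply ENNReal.ofReal_le_ofReal
    apply le_of_eq
    refine H.unique ?_
    simp only [hval]
    have := (green_sum α β hβ hαβ hα).mul_left (1 / κ)
    convert! this using 1
    ring
  · filter_upwards [ae_restrict_mem measurableSet_Ioi] with s hs
    have hs : 0 < s := hs
    exact Kn_nonneg (κ * s) α β (by positivity) ⟨by linarith, hα⟩ ⟨hβ, by linarith⟩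

lemma green_lint (κ α β : ℝ) (hκ : 0 < κ) (hα : α ∈ Set.Icc 0 π) (hβ : β ∈ Set.Icc 0 π) :
    ∫⁻ s in Set.Ioi (0 : ℝ), ENNReal.ofReal (Kn (κ * s) α β)
      ≤ ENNReal.ofReal (min α β * (π - max α β) / 2 / κ) := by
  rcases le_total β α with h | h
  · rw [min_eq_right h, max_eq_left h]
    exact green_lint_aux κ α β hκ hβ.1 h hα.2
  · rw [min_eq_left h, max_eq_right h]
    simp only [Kn_comm _ α β]
    exact green_lint_aux κ β α hκ hα.1 h hβ.2

lemma pker_eq (a t x y : ℝ) : pker a t x y =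
    (2 / a) * Kn (π ^ 2 / (2 * a ^ 2) * t) (π * x / a) (π * y / a) := by
  unfold pker Kn
  congr 1
  congr 1
  ext n
  have e1 : -(π^2) * ((n : ℝ) + 1)^2 * t / (2 * a^2) = -(π ^ 2 / (2 * a ^ 2) * t) * ((n : ℝ) + 1) ^ 2 := by ring
  have e2 : ∀ x : ℝ, π * ((n : ℝ) + 1) * x / a = ((n : ℝ) + 1) * (π * x / a) := fun x => by ring
  rw [e1, e2, e2]

lemma ang_mem (a x : ℝ) (ha : 0 < a) (hx : x ∈ Set.Icc 0 a) : π * x / a ∈ Set.Icc 0 π := by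
  have hpi := Real.pi_pos
  refine ⟨?_, ?_⟩
  · have := hx.1; positivity
  · rw [div_le_iff₀ ha]; have := hx.2; gcongr

lemma pker_comm (a t x y : ℝ) : pker a t x y = pker a t y x := by
  rw [pker_eq, pker_eq, Kn_comm]

lemma pker_nonneg (a s x z : ℝ) (ha : 0 < a) (hs : 0 < s) (hx : x ∈ Set.Icc 0 a) (hz : z ∈ Set.Icc 0 a) :
    0 ≤ pker a s x z := by
  rw [pker_eq]
  exact mul_nonneg (by positivity) (Kn_nonneg _ _ _ (by positivity) (ang_mem a x ha hx) (ang_mem a z ha hz))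

lemma tau_ge (a s : ℝ) (ha : 0 < a) (hs : a ^ 2 / 2 ≤ s) : 2 ≤ π ^ 2 / (2 * a ^ 2) * s := by
  have hpi := Real.pi_gt_three
  calc (2 : ℝ) ≤ π ^ 2 / 4 := by nlinarith
    _ = π ^ 2 / (2 * a ^ 2) * (a ^ 2 / 2) := by field_simp; norm_num
    _ ≤ _ := by gcongr

lemma pker_upper (a s x z : ℝ) (ha : 0 < a) (hs : a ^ 2 / 2 ≤ s) (hx : x ∈ Set.Icc 0 a) (hz : z ∈ Set.Icc 0 a) :
    |pker a s x z| ≤ 3 / a * (Real.exp (-(π ^ 2 / (2 * a ^ 2) * s)) * Real.sin (π * x / a) * Real.sin (π * z / a)) := by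
  rw [pker_eq, abs_mul, abs_of_pos (by positivity)]
  calc _ ≤ 2 / a * (3 / 2 * (Real.exp (-(π ^ 2 / (2 * a ^ 2) * s)) * Real.sin (π * x / a) * Real.sin (π * z / a))) := by
        gcongr
        exact Kn_upper _ _ _ (tau_ge a s ha hs) (ang_mem a x ha hx) (ang_mem a z ha hz)
    _ = _ := by ring

lemma pker_lower (a s x z : ℝ) (ha : 0 < a) (hs : a ^ 2 / 2 ≤ s) (hx : x ∈ Set.Icc 0 a) (hz : z ∈ Set.Icc 0 a) :
    1 / a * (Real.exp (-(π ^ 2 / (2 * a ^ 2) * s)) * Real.sin (π * x / a) * Real.sin (π * z / a)) ≤ pker a s x z := by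
  rw [pker_eq]
  calc _ = 2 / a * (1 / 2 * (Real.exp (-(π ^ 2 / (2 * a ^ 2) * s)) * Real.sin (π * x / a) * Real.sin (π * z / a))) := by ring
    _ ≤ _ := by
        gcongr
        exact Kn_lower _ _ _ (tau_ge a s ha hs) (ang_mem a x ha hx) (ang_mem a z ha hz)

lemma pker_measurable (a x : ℝ) : Measurable (fun p : ℝ × ℝ => pker a p.1 x p.2) := by
  unfold pker
  apply Measurable.const_mul
  apply Measurable.tsum
  intro n
  fun_prop

lemma pker_green (a x z : ℝ) (ha : 0 < a) (hx : x ∈ Set.Icc 0 a) (hz : z ∈ Set.Icc 0 a) :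
    ∫⁻ s in Set.Ioi (0 : ℝ), ENNReal.ofReal (pker a s x z)
      ≤ ENNReal.ofReal (2 / a * (min x z * (a - max x z))) := by
  have hpi := Real.pi_pos
  simp only [pker_eq]
  simp only [ENNReal.ofReal_mul (by positivity : 0 ≤ 2 / a)]
  rw [lintegral_const_mul' _ _ ENNReal.ofReal_ne_top]
  gcongr
  refine (green_lint _ _ _ (by positivity) (ang_mem a x ha hx) (ang_mem a z ha hz)).trans ?_
  apply ENNReal.ofReal_le_ofReal
  apply le_of_eq
  have hm : Monotone (fun u : ℝ => π * u / a) := by intro u v h; simp only; gcongr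
  have h1 := hm.map_min (a := x) (b := z)
  have h2 := hm.map_max (a := x) (b := z)
  rw [← h1, ← h2]
  field_simp

lemma sin_upper (a z : ℝ) (ha : 0 < a) (hz : z ∈ Set.Icc 0 a) :
    Real.sin (π * z / a) ≤ 2 * π * (z * (a - z)) / a ^ 2 := by
  have hpi := Real.pi_pos
  have h0 := hz.1
  have h1 := hz.2
  rcases le_total z (a / 2) with h | h
  · calc Real.sin (π * z / a) ≤ π * z / a := Real.sin_le (by positivity)
      _ = 2 * π * (z * (a / 2)) / a ^ 2 := by field_simp
      _ ≤ _ := by gcongr; linarith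
  · have e : Real.sin (π * z / a) = Real.sin (π * (a - z) / a) := by
      rw [← Real.sin_pi_sub]; congr 1; field_simp
    have h2 : 0 ≤ a - z := by linarith
    rw [e]
    calc Real.sin (π * (a - z) / a) ≤ π * (a - z) / a := Real.sin_le (by positivity)
      _ = 2 * π * ((a / 2) * (a - z)) / a ^ 2 := by field_simp
      _ ≤ _ := by gcongr

lemma sin_lower (a z : ℝ) (ha : 0 < a) (hz : z ∈ Set.Icc 0 a) :
    2 * (z * (a - z)) / a ^ 2 ≤ Real.sin (π * z / a) := by
  have hpi := Real.pi_pos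
  have h0 := hz.1
  have h1 := hz.2
  have key : ∀ w : ℝ, 0 ≤ w → w ≤ a / 2 → 2 * (w * (a - w)) / a ^ 2 ≤ Real.sin (π * w / a) := by
    intro w hw hw2
    have := Real.mul_le_sin (x := π * w / a) (by positivity) (by
      rw [div_le_div_iff₀ ha (by norm_num)]; nlinarith)
    refine le_trans ?_ this
    calc 2 * (w * (a - w)) / a ^ 2 ≤ 2 * (w * a) / a ^ 2 := by gcongr; linarith
      _ = 2 / π * (π * w / a) := by field_simp
  rcases le_total z (a / 2) with h | h
  · exact key z h0 h
  · have e : Real.sin (π * z / a) = Real.sin (π * (a - z) / a) := by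
      rw [← Real.sin_pi_sub]; congr 1; field_simp
    rw [e]
    have := key (a - z) (by linarith) (by linarith)
    convert! this using 2
    ring

lemma sin_ratio (a x z : ℝ) (ha : 0 < a) (hx : x ∈ Set.Ioo 0 a) (hz : z ∈ Set.Icc 0 a) :
    Real.sin (π * z / a) / Real.sin (π * x / a) ≤ π * (z * (a - z)) / (x * (a - x)) := by
  have hpi := Real.pi_pos
  have h1 : 0 < a - x := by linarith [hx.2]
  have h2 : 0 ≤ a - z := by linarith [hz.2]
  have h3 := hx.1
  have h4 := hz.1
  have hl := sin_lower a x ha ⟨hx.1.le, hx.2.le⟩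
  calc _ ≤ (2 * π * (z * (a - z)) / a ^ 2) / (2 * (x * (a - x)) / a ^ 2) := by
        gcongr
        exact sin_upper a z ha hz
    _ = _ := by field_simp

lemma green_real (a x z : ℝ) (ha : 0 < a) (hx : x ∈ Set.Ioo 0 a) (hz : z ∈ Set.Icc 0 a) :
    2 / a * (min x z * (a - max x z)) * (Real.sin (π * z / a) / Real.sin (π * x / a))
      ≤ 2 * π * min 1 (1 / x) * (z + z ^ 2) := by
  have hpi := Real.pi_pos
  have h1 : 0 < a - x := by linarith [hx.2]
  have h2 : 0 ≤ a - z := by linarith [hz.2]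
  have h3 := hx.1
  have h4 := hz.1
  have hmin : ∀ w : ℝ, w ≤ z + z ^ 2 → w ≤ (z + z ^ 2) / x → w ≤ min 1 (1 / x) * (z + z ^ 2) := by
    intro w hw1 hw2
    rcases min_choice 1 (1 / x) with h | h
    · rw [h]; linarith
    · rw [h]; calc w ≤ _ := hw2
        _ = _ := by ring
  have hr := sin_ratio a x z ha hx hz
  rcases le_total z x with h | h
  · rw [min_eq_right h, max_eq_left h]
    calc _ ≤ 2 / a * (z * (a - x)) * (π * (z * (a - z)) / (x * (a - x))) := by gcongr
      _ = 2 * π * (z ^ 2 / x * ((a - z) / a)) := by field_simp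
      _ ≤ 2 * π * (z ^ 2 / x * 1) := by
          gcongr; rw [div_le_one ha]; linarith
      _ ≤ 2 * π * (min 1 (1 / x) * (z + z ^ 2)) := by
          refine mul_le_mul_of_nonneg_left ?_ (by positivity)
          apply hmin
          · rw [mul_one, div_le_iff₀ h3]; nlinarith [mul_nonneg h4 (sub_nonneg.2 h), mul_nonneg (sq_nonneg z) h3.le]
          · rw [mul_one]; gcongr; linarith
      _ = _ := by ring
  · rw [min_eq_left h, max_eq_right h]
    calc _ ≤ 2 / a * (x * (a - z)) * (π * (z * (a - z)) / (x * (a - x))) := by gcongr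
      _ = 2 * π * (z * ((a - z) / a * ((a - z) / (a - x)))) := by field_simp
      _ ≤ 2 * π * (z * (1 * 1)) := by
          gcongr
          · rw [div_le_one ha]; linarith
          · rw [div_le_one h1]; linarith
      _ ≤ 2 * π * (min 1 (1 / x) * (z + z ^ 2)) := by
          refine mul_le_mul_of_nonneg_left ?_ (by positivity)
          apply hmin
          · nlinarith [sq_nonneg z]
          · rw [le_div_iff₀ h3]; nlinarith
      _ = _ := by ring

lemma pointwise_bound (c a x y z s t : ℝ) (ha : 0 < a) (hx : x ∈ Set.Ioo 0 a) (hy : y ∈ Set.Ioo 0 a)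
    (hz : z ∈ Set.Icc 0 a) (ht : a ^ 2 ≤ t) (hs : 0 < s) (hst : s ≤ t / 2) :
    |pker a s x z * Real.exp (-c * z) * pker a (t - s) z y| ≤
      81 * pker a t x y * Real.exp (-c * z) * (Real.sin (π * z / a) / Real.sin (π * x / a)) * pker a s x z
      + 90 * pker a t x y / a ^ 3 * ((z + z ^ 2) * Real.exp (-c * z)) := by
  have hpi := Real.pi_pos
  have hx' : x ∈ Set.Icc 0 a := ⟨hx.1.le, hx.2.le⟩
  have hy' : y ∈ Set.Icc 0 a := ⟨hy.1.le, hy.2.le⟩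
  have hp := pker_nonneg a s x z ha hs hx' hz
  have hP := pker_lower a t x y ha (by nlinarith) hx' hy'
  have hq := pker_upper a (t - s) z y ha (by linarith) hz hy'
  have hPn := pker_nonneg a t x y ha (by nlinarith) hx' hy'
  have hu := Real.exp_pos (-c * z)
  have hsz : 0 ≤ Real.sin (π * z / a) := Real.sin_nonneg_of_mem_Icc (ang_mem a z ha hz)
  have hsz2 : Real.sin (π * z / a) ≤ π * z / a := Real.sin_le (by have := hz.1; positivity)
  have hsx : 0 < Real.sin (π * x / a) := by
    have := hx.1
    apply Real.sin_pos_of_pos_of_lt_pi (by positivity)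
    rw [div_lt_iff₀ ha]; have := hx.2; gcongr
  set κ := π ^ 2 / (2 * a ^ 2) with hκ
  set P := pker a t x y
  set p := pker a s x z with hpdef
  set q := pker a (t - s) z y
  set u := Real.exp (-c * z)
  set Sx := Real.sin (π * x / a)
  set Sz := Real.sin (π * z / a)
  set Sy := Real.sin (π * y / a)
  have hq2 : |q| ≤ 3 * Real.exp (κ * s) * (Sz / Sx) * P := by
    calc |q| ≤ 3 / a * (Real.exp (-(κ * (t - s))) * Sz * Sy) := hq
      _ = 3 * Real.exp (κ * s) * (Sz / Sx) * (1 / a * (Real.exp (-(κ * t)) * Sx * Sy)) := by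
          have : -(κ * (t - s)) = κ * s + -(κ * t) := by ring
          rw [this, Real.exp_add]
          field_simp
      _ ≤ _ := by gcongr
  have hep : Real.exp (κ * s) * p ≤ 27 * p + 3 / a * (Sx * Sz) := by
    rcases le_total s (a ^ 2 / 2) with h | h
    · have : Real.exp (κ * s) ≤ 27 := by
        have h3 : κ * s ≤ 3 := by
          calc κ * s ≤ κ * (a ^ 2 / 2) := by gcongr
            _ = π ^ 2 / 4 := by rw [hκ]; field_simp; norm_num
            _ ≤ 3 := by nlinarith [Real.pi_lt_d2]
        calc Real.exp (κ * s) ≤ Real.exp 3 := Real.exp_le_exp.2 h3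
          _ = Real.exp 1 ^ 3 := by rw [← Real.exp_nat_mul]; norm_num
          _ ≤ 3 ^ 3 := by gcongr; exact (Real.exp_one_lt_d9.le.trans (by norm_num))
          _ = 27 := by norm_num
      have h0 : 0 ≤ 3 / a * (Sx * Sz) := by positivity
      nlinarith
    · have := pker_upper a s x z ha h hx' hz
      have h5 : p ≤ 3 / a * (Real.exp (-(κ * s)) * Sx * Sz) := (le_abs_self _).trans this
      calc Real.exp (κ * s) * p ≤ Real.exp (κ * s) * (3 / a * (Real.exp (-(κ * s)) * Sx * Sz)) := by gcongr
        _ = 3 / a * (Sx * Sz) * (Real.exp (κ * s) * Real.exp (-(κ * s))) := by ring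
        _ = 3 / a * (Sx * Sz) := by rw [← Real.exp_add]; simp
        _ ≤ _ := by linarith
  have hS2 : Sz ^ 2 ≤ 10 * (z + z ^ 2) / a ^ 2 := by
    have hz0 := hz.1
    calc Sz ^ 2 ≤ (π * z / a) ^ 2 := by gcongr
      _ = π ^ 2 * z ^ 2 / a ^ 2 := by ring
      _ ≤ 10 * (z + z ^ 2) / a ^ 2 := by
          gcongr
          · nlinarith [Real.pi_lt_d2]
          · linarith
  rw [abs_mul, abs_mul, abs_of_nonneg hp, abs_of_pos hu]
  calc p * u * |q| ≤ p * u * (3 * Real.exp (κ * s) * (Sz / Sx) * P) := by gcongr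
    _ = 3 * P * u * (Sz / Sx) * (Real.exp (κ * s) * p) := by ring
    _ ≤ 3 * P * u * (Sz / Sx) * (27 * p + 3 / a * (Sx * Sz)) := by gcongr
    _ = 81 * P * u * (Sz / Sx) * p + 9 * P * u / a * Sz ^ 2 := by field_simp; ring
    _ ≤ 81 * P * u * (Sz / Sx) * p + 9 * P * u / a * (10 * (z + z ^ 2) / a ^ 2) := by gcongr
    _ = _ := by field_simp; ring

lemma weight_finite (c : ℝ) (hc : 0 < c) :
    ∃ M : ℝ, 0 < M ∧ ∫⁻ z in Set.Ioi (0 : ℝ), ENNReal.ofReal ((z + z ^ 2) * Real.exp (-c * z)) ≤ ENNReal.ofReal M := by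
  have h1 := integrableOn_rpow_mul_exp_neg_mul_rpow (p := 1) (s := 1) (b := c) (by norm_num) (by norm_num) hc
  have h2 := integrableOn_rpow_mul_exp_neg_mul_rpow (p := 1) (s := 2) (b := c) (by norm_num) (by norm_num) hc
  have h : IntegrableOn (fun z : ℝ => (z + z ^ 2) * Real.exp (-c * z)) (Set.Ioi 0) := by
    refine (h1.add h2).congr (Eventually.of_forall (fun z => ?_))
    simp
    ring
  refine ⟨(∫ z in Set.Ioi (0 : ℝ), (z + z ^ 2) * Real.exp (-c * z)) + 1, ?_, ?_⟩
  · have : 0 ≤ ∫ z in Set.Ioi (0 : ℝ), (z + z ^ 2) * Real.exp (-c * z) := by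
      apply setIntegral_nonneg measurableSet_Ioi
      intro z hz
      have hz : 0 < z := hz
      positivity
    linarith
  · rw [← ofReal_integral_eq_lintegral_ofReal h]
    · apply ENNReal.ofReal_le_ofReal; linarith
    · filter_upwards [ae_restrict_mem measurableSet_Ioi] with z hz
      have hz : 0 < z := hz
      simp only [Pi.zero_apply]
      positivity

lemma half_bound (c M a x y t : ℝ) (hM : 0 < M)
    (hMi : ∫⁻ z in Set.Ioi (0 : ℝ), ENNReal.ofReal ((z + z ^ 2) * Real.exp (-c * z)) ≤ ENNReal.ofReal M)
    (ha : 0 < a) (hx : x ∈ Set.Ioo 0 a) (hy : y ∈ Set.Ioo 0 a) (ht : a ^ 2 ≤ t) :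
    ∫⁻ s in Set.Ioc 0 (t / 2), ∫⁻ z in Set.Ioc 0 a, ‖pker a s x z * Real.exp (-c * z) * pker a (t - s) z y‖ₑ
      ≤ ENNReal.ofReal (600 * M * (t / a ^ 3 + min 1 (1 / x)) * pker a t x y) := by
  have hpi := Real.pi_pos
  have hx' : x ∈ Set.Icc 0 a := ⟨hx.1.le, hx.2.le⟩
  have hy' : y ∈ Set.Icc 0 a := ⟨hy.1.le, hy.2.le⟩
  have ht0 : 0 < t := by nlinarith
  have hx0 := hx.1
  have hP := pker_nonneg a t x y ha ht0 hx' hy'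
  set P := pker a t x y
  have hm : 0 ≤ min 1 (1 / x) := by positivity
  set m := min 1 (1 / x)
  let A : ℝ → ℝ := fun z => 81 * P * Real.exp (-c * z) * (Real.sin (π * z / a) / Real.sin (π * x / a))
  let W : ℝ → ℝ := fun z => (z + z ^ 2) * Real.exp (-c * z)
  have hsn : ∀ z ∈ Set.Icc 0 a, 0 ≤ Real.sin (π * z / a) := fun z hz =>
    Real.sin_nonneg_of_mem_Icc (ang_mem a z ha hz)
  have hA : ∀ z ∈ Set.Icc 0 a, 0 ≤ A z := by
    intro z hz
    have := hsn z hz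
    have := hsn x hx'
    simp only [A]; positivity
  have hW : ∀ z ∈ Set.Icc 0 a, 0 ≤ W z := by
    intro z hz
    have := hz.1
    simp only [W]; positivity
  have hWm : Measurable (fun z => ENNReal.ofReal (W z)) := by
    simp only [W]; fun_prop
  have hAm : Measurable A := by
    simp only [A]; fun_prop
  have hWle : ∫⁻ z in Set.Ioc 0 a, ENNReal.ofReal (W z) ≤ ENNReal.ofReal M :=
    (lintegral_mono_set Set.Ioc_subset_Ioi_self).trans hMi
  have hmeas : Measurable (fun p : ℝ × ℝ => ENNReal.ofReal (A p.2) * ENNReal.ofReal (pker a p.1 x p.2)) :=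
    ((hAm.comp measurable_snd).ennreal_ofReal).mul (pker_measurable a x).ennreal_ofReal
  have hpt : ∀ s ∈ Set.Ioc 0 (t / 2), ∀ z ∈ Set.Ioc 0 a,
      ‖pker a s x z * Real.exp (-c * z) * pker a (t - s) z y‖ₑ ≤
       ENNReal.ofReal (A z) * ENNReal.ofReal (pker a s x z)
        + ENNReal.ofReal (90 * P / a ^ 3) * ENNReal.ofReal (W z) := by
    intro s hs z hz
    have hz' : z ∈ Set.Icc 0 a := ⟨hz.1.le, hz.2⟩
    have h := pointwise_bound c a x y z s t ha hx hy hz' ht hs.1 hs.2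
    have hp := pker_nonneg a s x z ha hs.1 hx' hz'
    rw [← ENNReal.ofReal_mul (hA z hz'), ← ENNReal.ofReal_mul (by positivity),
      ← ENNReal.ofReal_add (mul_nonneg (hA z hz') hp) (mul_nonneg (by positivity) (hW z hz')),
      Real.enorm_eq_ofReal_abs]
    exact ENNReal.ofReal_le_ofReal h
  calc _ ≤ ∫⁻ s in Set.Ioc 0 (t / 2), ∫⁻ z in Set.Ioc 0 a,
        (ENNReal.ofReal (A z) * ENNReal.ofReal (pker a s x z)
        + ENNReal.ofReal (90 * P / a ^ 3) * ENNReal.ofReal (W z)) :=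
        setLIntegral_mono' measurableSet_Ioc (fun s hs =>
          setLIntegral_mono' measurableSet_Ioc (fun z hz => hpt s hs z hz))
    _ = (∫⁻ s in Set.Ioc 0 (t / 2), ∫⁻ z in Set.Ioc 0 a,
        ENNReal.ofReal (A z) * ENNReal.ofReal (pker a s x z))
        + ∫⁻ s in Set.Ioc 0 (t / 2), ∫⁻ z in Set.Ioc 0 a,
          ENNReal.ofReal (90 * P / a ^ 3) * ENNReal.ofReal (W z) := by
        rw [← lintegral_add_right _ measurable_const]
        congr 1; ext s
        rw [lintegral_add_right _ (hWm.const_mul _)]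
    _ ≤ ENNReal.ofReal (162 * π * P * m * M) + ENNReal.ofReal (45 * P * (t / a ^ 3) * M) := by
        gcongr
        · calc _ ≤ ∫⁻ s in Set.Ioi 0, ∫⁻ z in Set.Ioc 0 a,
                ENNReal.ofReal (A z) * ENNReal.ofReal (pker a s x z) :=
                lintegral_mono_set Set.Ioc_subset_Ioi_self
            _ = ∫⁻ z in Set.Ioc 0 a, ∫⁻ s in Set.Ioi 0,
                ENNReal.ofReal (A z) * ENNReal.ofReal (pker a s x z) :=
                lintegral_lintegral_swap hmeas.aemeasurable
            _ ≤ ∫⁻ z in Set.Ioc 0 a, ENNReal.ofReal (162 * π * P * m) * ENNReal.ofReal (W z) := by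
                apply setLIntegral_mono' measurableSet_Ioc
                intro z hz
                have hz' : z ∈ Set.Icc 0 a := ⟨hz.1.le, hz.2⟩
                rw [lintegral_const_mul' _ _ ENNReal.ofReal_ne_top]
                calc _ ≤ ENNReal.ofReal (A z) * ENNReal.ofReal (2 / a * (min x z * (a - max x z))) := by
                      gcongr
                      exact pker_green a x z ha hx' hz'
                  _ = ENNReal.ofReal (A z * (2 / a * (min x z * (a - max x z)))) :=
                      (ENNReal.ofReal_mul (hA z hz')).symm
                  _ ≤ ENNReal.ofReal ((162 * π * P * m) * W z) := by
                      apply ENNReal.ofReal_le_ofReal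
                      have hg := green_real a x z ha hx hz'
                      calc A z * (2 / a * (min x z * (a - max x z)))
                          = 81 * P * Real.exp (-c * z) * (2 / a * (min x z * (a - max x z)) * (Real.sin (π * z / a) / Real.sin (π * x / a))) := by
                            simp only [A]; ring
                        _ ≤ 81 * P * Real.exp (-c * z) * (2 * π * m * (z + z ^ 2)) := by gcongr
                        _ = _ := by simp only [W]; ring
                  _ = _ := ENNReal.ofReal_mul (by positivity)
            _ = ENNReal.ofReal (162 * π * P * m) * ∫⁻ z in Set.Ioc 0 a, ENNReal.ofReal (W z) :=
                lintegral_const_mul' _ _ ENNReal.ofReal_ne_top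
            _ ≤ ENNReal.ofReal (162 * π * P * m) * ENNReal.ofReal M := by gcongr
            _ = _ := (ENNReal.ofReal_mul (by positivity)).symm
        · rw [lintegral_const, lintegral_const_mul' _ _ ENNReal.ofReal_ne_top]
          rw [Measure.restrict_apply MeasurableSet.univ, Set.univ_inter, Real.volume_Ioc, sub_zero]
          calc _ ≤ ENNReal.ofReal (90 * P / a ^ 3) * ENNReal.ofReal M * ENNReal.ofReal (t / 2) := by gcongr
            _ = ENNReal.ofReal (90 * P / a ^ 3 * M * (t / 2)) := by
                rw [← ENNReal.ofReal_mul (by positivity), ← ENNReal.ofReal_mul (by positivity)]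
            _ = _ := by congr 1; ring
    _ = ENNReal.ofReal (162 * π * P * m * M + 45 * P * (t / a ^ 3) * M) :=
        (ENNReal.ofReal_add (by positivity) (by positivity)).symm
    _ ≤ _ := by
        apply ENNReal.ofReal_le_ofReal
        have h1 : 162 * π * P * m * M ≤ 162 * 3.15 * P * m * M := by
          gcongr; exact Real.pi_lt_d2.le
        have h2 : 0 ≤ P * m * M := by positivity
        have h3 : 0 ≤ P * (t / a ^ 3) * M := by positivity
        nlinarith

lemma second_half (c a x y t : ℝ) :
    ∫⁻ s in Set.Ioc (t / 2) t, ∫⁻ z in Set.Ioc 0 a, ‖pker a s x z * Real.exp (-c * z) * pker a (t - s) z y‖ₑ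
    ≤ ∫⁻ s in Set.Ioc 0 (t / 2), ∫⁻ z in Set.Ioc 0 a, ‖pker a s y z * Real.exp (-c * z) * pker a (t - s) z x‖ₑ := by
  set f : ℝ → ENNReal := fun s => ∫⁻ z in Set.Ioc 0 a, ‖pker a s x z * Real.exp (-c * z) * pker a (t - s) z y‖ₑ
  set g : ℝ → ENNReal := fun s => ∫⁻ z in Set.Ioc 0 a, ‖pker a s y z * Real.exp (-c * z) * pker a (t - s) z x‖ₑ
  have hfg : ∀ s, f (t - s) = g s := by
    intro s
    simp only [f, g]
    congr 1; ext z
    rw [sub_sub_cancel, pker_comm a s z y, pker_comm a (t - s) x z]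
    congr 1; ring
  change ∫⁻ s in Set.Ioc (t / 2) t, f s ≤ ∫⁻ s in Set.Ioc 0 (t / 2), g s
  rw [← lintegral_indicator measurableSet_Ioc f]
  rw [← lintegral_sub_left_eq_self _ t]
  rw [← Measure.restrict_congr_set (Ico_ae_eq_Ioc (μ := volume) (a := (0 : ℝ)) (b := t / 2))]
  rw [← lintegral_indicator measurableSet_Ico g]
  apply lintegral_mono
  intro s
  simp only [Set.indicator_apply, Set.mem_Ioc, Set.mem_Ico]
  by_cases h : t / 2 < t - s ∧ t - s ≤ t
  · rw [if_pos h, if_pos ⟨by linarith [h.2], by linarith [h.1]⟩, hfg]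
  · rw [if_neg h]; exact zero_le

/-- Taboo-bridge estimate for `t ≥ a²`: the expectation of `∫_0^t e^{−cX_s} ds`
under the taboo bridge from `x` to `y` of length `t` is at most
`C·(t/a³ + min(1,1/x) + min(1,1/y))`. -/
theorem stmt11 (c : ℝ) (hc : 0 < c) :
    ∃ C : ℝ, 0 < C ∧ ∀ a : ℝ, 0 < a → ∀ x ∈ Set.Ioo (0:ℝ) a, ∀ y ∈ Set.Ioo (0:ℝ) a,
      ∀ t : ℝ, a^2 ≤ t →
      (∫ s in (0:ℝ)..t, ∫ z in (0:ℝ)..a,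
          pker a s x z * Real.exp (-c * z) * pker a (t - s) z y) ≤
        C * (t / a^3 + min 1 (1/x) + min 1 (1/y)) * pker a t x y := by

  obtain ⟨M, hM, hMi⟩ := weight_finite c hc
  refine ⟨1200 * M, by positivity, ?_⟩
  intro a ha x hx y hy t ht
  have ht0 : 0 < t := by nlinarith
  have hx0 := hx.1
  have hy0 := hy.1
  have hP := pker_nonneg a t x y ha ht0 ⟨hx.1.le, hx.2.le⟩ ⟨hy.1.le, hy.2.le⟩
  have h1 := half_bound c M a x y t hM hMi ha hx hy ht
  have h2 := (second_half c a x y t).trans (half_bound c M a y x t hM hMi ha hy hx ht)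
  rw [pker_comm a t y x] at h2
  have hmx : 0 ≤ min 1 (1 / x) := by positivity
  have hmy : 0 ≤ min 1 (1 / y) := by positivity
  have hta : 0 ≤ t / a ^ 3 := by positivity
  set P := pker a t x y
  have hE : ‖∫ s in (0:ℝ)..t, ∫ z in (0:ℝ)..a,
          pker a s x z * Real.exp (-c * z) * pker a (t - s) z y‖ₑ ≤
      ENNReal.ofReal (1200 * M * (t / a^3 + min 1 (1/x) + min 1 (1/y)) * P) := by
    rw [intervalIntegral.integral_of_le ht0.le]
    calc _ ≤ ∫⁻ s in Set.Ioc 0 t, ‖∫ z in (0:ℝ)..a,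
          pker a s x z * Real.exp (-c * z) * pker a (t - s) z y‖ₑ := enorm_integral_le_lintegral_enorm _
      _ ≤ ∫⁻ s in Set.Ioc 0 t, ∫⁻ z in Set.Ioc 0 a,
          ‖pker a s x z * Real.exp (-c * z) * pker a (t - s) z y‖ₑ := by
          apply lintegral_mono
          intro s
          simp only
          rw [intervalIntegral.integral_of_le ha.le]
          exact enorm_integral_le_lintegral_enorm _
      _ ≤ (∫⁻ s in Set.Ioc 0 (t / 2), ∫⁻ z in Set.Ioc 0 a,
          ‖pker a s x z * Real.exp (-c * z) * pker a (t - s) z y‖ₑ) +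
          ∫⁻ s in Set.Ioc (t / 2) t, ∫⁻ z in Set.Ioc 0 a,
          ‖pker a s x z * Real.exp (-c * z) * pker a (t - s) z y‖ₑ := by
          rw [← Set.Ioc_union_Ioc_eq_Ioc (by linarith : 0 ≤ t / 2) (by linarith : t / 2 ≤ t)]
          exact lintegral_union_le _ _ _
      _ ≤ _ := add_le_add h1 h2
      _ = ENNReal.ofReal (600 * M * (t / a ^ 3 + min 1 (1 / x)) * P
            + 600 * M * (t / a ^ 3 + min 1 (1 / y)) * P) :=
          (ENNReal.ofReal_add (by positivity) (by positivity)).symm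
      _ ≤ _ := by
          apply ENNReal.ofReal_le_ofReal
          have e1 : 0 ≤ M * min 1 (1 / x) * P := by positivity
          have e2 : 0 ≤ M * min 1 (1 / y) * P := by positivity
          nlinarith
  rw [Real.enorm_eq_ofReal_abs, ENNReal.ofReal_le_ofReal_iff (by positivity)] at hE
  exact (le_abs_self _).trans hE
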